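/- Let n ≥ 1. There exists a constant C > 0 such that for every F ∈ L²(ℝ^{n+1}_+), the maximal regularity operator (M⁺F)(t,·) := ∫₀^t ((Δh_{t−s}) ⋆ F(s,·)) ds satisfies ‖M⁺F‖_{L²(ℝ^{n+1}_+)} ≤ C ‖F‖_{L²(ℝ^{n+1}_+)} (de Simon's maximal regularity estimate for the heat semigroup). -/

import Mathlib

open MeasureTheory Real ENNReal
open scoped ENNReal NNReal FourierTransform RealInnerProductSpace

noncomputable section

/-- `ℝⁿ` with the Euclidean norm. -/
abbrev Rn (n : ℕ) := EuclideanSpace ℝ (Fin n)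
/-- `ℂⁿ` with the Euclidean norm. -/
abbrev Cn (n : ℕ) := EuclideanSpace ℂ (Fin n)
/-- `ℂⁿ ⊗ ℂⁿ` (i.e. `n × n` complex matrices) with the Frobenius norm. -/
abbrev Mn (n : ℕ) := EuclideanSpace ℂ (Fin n × Fin n)

instance (n : ℕ) : MeasurableSpace (Cn n) := borel _
instance (n : ℕ) : BorelSpace (Cn n) := ⟨rfl⟩
instance (n : ℕ) : MeasurableSpace (Mn n) := borel _
instance (n : ℕ) : BorelSpace (Mn n) := ⟨rfl⟩

/-- The `L²(ℝ^{n+1}_+)`-norm of a function on the upper half space,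
as an `ℝ≥0∞`-valued quantity. -/
def l2HalfNorm {n : ℕ} {V : Type*} [NormedAddCommGroup V] (F : ℝ → Rn n → V) : ℝ≥0∞ :=
  (∫⁻ t in Set.Ioi (0 : ℝ), ∫⁻ x : Rn n, (‖F t x‖₊ : ℝ≥0∞) ^ 2) ^ (1 / 2 : ℝ)

/-- The Gaussian heat kernel `h_t(x) = (4πt)^{-n/2} exp(-|x|²/(4t))`. -/
def heatKernel (n : ℕ) (t : ℝ) (x : Rn n) : ℝ :=
  (4 * π * t) ^ (-(n : ℝ) / 2) * Real.exp (-‖x‖ ^ 2 / (4 * t))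

/-- The Laplacian `Δh_t` of the Gaussian heat kernel (explicit formula), so that
convolution with `Δh_τ` realizes `Δe^{τΔ}`. -/
def heatKernelLap (n : ℕ) (t : ℝ) (x : Rn n) : ℝ :=
  (‖x‖ ^ 2 / (4 * t ^ 2) - n / (2 * t)) * heatKernel n t x

/-- The maximal regularity operator `(M⁺F)(t,·) = ∫₀^t (Δh_{t-s}) ⋆ F(s,·) ds`. -/
def maxReg (n : ℕ) {V : Type*} [NormedAddCommGroup V] [NormedSpace ℝ V]
    (F : ℝ → Rn n → V) (t : ℝ) (x : Rn n) : V :=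
  ∫ s in Set.Ioo (0 : ℝ) t, ∫ y : Rn n, heatKernelLap n (t - s) (x - y) • F s y

/-! `M⁺F` is the space-time convolution of `F` with `𝟙_(0, ∞)(t) Δh_t(x)`. The Fourier transform of
this kernel in `x` alone is `-λ e^{-λt}` with `λ = 4π²|ξ|²`, and `∫_0^∞ λ e^{-λt} dt ≤ 1`, so its
space-time Fourier transform is bounded by `1`. Cutting the kernel off to times in `[ε, R]` makes it
integrable and square integrable without spoiling this bound, so by Plancherel the truncated
convolution is a contraction of `L²`; Fatou's lemma removes the cutoff. -/

open ContinuousLinearMap Filter SchwartzMap Topology Convolution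

section HolderConvolution

variable {𝕜 G V : Type*} [NontriviallyNormedField 𝕜] [NormedAddCommGroup V] [NormedSpace 𝕜 V]
  [AddCommGroup G] [MeasurableSpace G] [MeasurableAdd₂ G] [MeasurableNeg G] {μ : Measure G}
  {K : G → 𝕜} {f : G → V}

theorem aestronglyMeasurable_convolution [NormedSpace ℝ V] [SFinite μ] [μ.IsAddRightInvariant]
    (hK : AEStronglyMeasurable K μ) (hf : AEStronglyMeasurable f μ) :
    AEStronglyMeasurable (K ⋆[lsmul 𝕜 𝕜, μ] f) μ :=
  (hK.convolution_integrand (lsmul 𝕜 𝕜) hf).integral_prod_right'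

variable [μ.IsAddLeftInvariant] [μ.IsNegInvariant] {p q : ℝ≥0∞} [p.HolderTriple q 1]

theorem convolutionExists_of_memLp (hK : MemLp K p μ) (hf : MemLp f q μ) :
    ConvolutionExists K f (lsmul 𝕜 𝕜) μ := fun x ↦
  memLp_one_iff_integrable.1 <|
    (hf.comp_measurePreserving (Measure.measurePreserving_sub_left μ x)).smul hK

variable [NormedSpace ℝ V]

theorem enorm_convolution_le_eLpNorm_mul_eLpNorm (hK : AEStronglyMeasurable K μ)
    (hf : AEStronglyMeasurable f μ) (x : G) :
    ‖(K ⋆[lsmul 𝕜 𝕜, μ] f) x‖ₑ ≤ eLpNorm K p μ * eLpNorm f q μ := by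
  have hx := Measure.measurePreserving_sub_left μ x
  calc ‖(K ⋆[lsmul 𝕜 𝕜, μ] f) x‖ₑ
      ≤ ∫⁻ y, ‖K y • f (x - y)‖ₑ ∂μ := enorm_integral_le_lintegral_enorm _
    _ = eLpNorm (K • (f ∘ fun y ↦ x - y)) 1 μ := eLpNorm_one_eq_lintegral_enorm.symm
    _ ≤ eLpNorm K p μ * eLpNorm (f ∘ fun y ↦ x - y) q μ :=
        eLpNorm_smul_le_mul_eLpNorm (hf.comp_measurePreserving hx) hK
    _ = eLpNorm K p μ * eLpNorm f q μ := by rw [eLpNorm_comp_measurePreserving hf hx]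

theorem tendsto_convolution_of_tendsto_eLpNorm_sub {ι : Type*} {l : Filter ι} {φ : ι → G → V}
    (hK : MemLp K p μ) (hf : MemLp f q μ) (hφ : ∀ i, MemLp (φ i) q μ)
    (hlim : Tendsto (fun i ↦ eLpNorm (φ i - f) q μ) l (𝓝 0)) (x : G) :
    Tendsto (fun i ↦ (K ⋆[lsmul 𝕜 𝕜, μ] φ i) x) l (𝓝 ((K ⋆[lsmul 𝕜 𝕜, μ] f) x)) := by
  have hsub (i : ι) : (K ⋆[lsmul 𝕜 𝕜, μ] (φ i - f)) x =
      (K ⋆[lsmul 𝕜 𝕜, μ] φ i) x - (K ⋆[lsmul 𝕜 𝕜, μ] f) x := by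
    simp only [convolution_def, Pi.sub_apply, map_sub]
    exact integral_sub (convolutionExists_of_memLp hK (hφ i) x)
      (convolutionExists_of_memLp hK hf x)
  rw [tendsto_iff_edist_tendsto_0]
  refine tendsto_of_tendsto_of_tendsto_of_le_of_le tendsto_const_nhds
    (by simpa using ENNReal.Tendsto.const_mul hlim (.inr hK.eLpNorm_ne_top))
    (fun _ ↦ zero_le) fun i ↦ ?_
  rw [edist_eq_enorm_sub, ← hsub]
  exact enorm_convolution_le_eLpNorm_mul_eLpNorm hK.1 ((hφ i).sub hf).1 x

theorem eLpNorm_convolution_le_of_tendsto [SFinite μ] {r C : ℝ≥0∞} {φ : ℕ → G → V}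
    (hq : 1 ≤ q) (hK : MemLp K p μ) (hf : MemLp f q μ) (hφ : ∀ k, MemLp (φ k) q μ)
    (hlim : Tendsto (fun k ↦ eLpNorm (φ k - f) q μ) atTop (𝓝 0)) (hC : C ≠ ∞)
    (hle : ∀ k, eLpNorm (K ⋆[lsmul 𝕜 𝕜, μ] φ k) r μ ≤ C * eLpNorm (φ k) q μ) :
    eLpNorm (K ⋆[lsmul 𝕜 𝕜, μ] f) r μ ≤ C * eLpNorm f q μ := by
  have hle' (k : ℕ) : eLpNorm (K ⋆[lsmul 𝕜 𝕜, μ] φ k) r μ ≤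
      C * (eLpNorm (φ k - f) q μ + eLpNorm f q μ) := by
    refine (hle k).trans ?_
    gcongr
    simpa only [sub_add_cancel] using eLpNorm_add_le ((hφ k).sub hf).1 hf.1 hq
  have hlim' : Tendsto (fun k ↦ C * (eLpNorm (φ k - f) q μ + eLpNorm f q μ)) atTop
      (𝓝 (C * eLpNorm f q μ)) := by
    simpa using ENNReal.Tendsto.const_mul (hlim.add_const _) (.inr hC)
  calc eLpNorm (K ⋆[lsmul 𝕜 𝕜, μ] f) r μ
      ≤ liminf (fun k ↦ eLpNorm (K ⋆[lsmul 𝕜 𝕜, μ] φ k) r μ) atTop :=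
        Lp.eLpNorm_lim_le_liminf_eLpNorm
          (fun k ↦ aestronglyMeasurable_convolution hK.1 (hφ k).1) _
          (.of_forall (tendsto_convolution_of_tendsto_eLpNorm_sub hK hf hφ hlim))
    _ ≤ liminf (fun k ↦ C * (eLpNorm (φ k - f) q μ + eLpNorm f q μ)) atTop :=
        liminf_le_liminf (.of_forall hle')
    _ = C * eLpNorm f q μ := hlim'.liminf_eq

end HolderConvolution

theorem memLp_two_of_integrable_of_norm_le {α V : Type*} [NormedAddCommGroup V]
    [MeasurableSpace α] {μ : Measure α} {f : α → V} {B : ℝ} (hf : Integrable f μ)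
    (hB : ∀ x, ‖f x‖ ≤ B) : MemLp f 2 μ := by
  rw [memLp_two_iff_integrable_sq_norm hf.1]
  simpa only [sq] using hf.norm.bdd_mul hf.norm.1 (.of_forall fun x ↦ by simpa using hB x)

section Plancherel

variable {E V : Type*} [NormedAddCommGroup E] [InnerProductSpace ℝ E] [FiniteDimensional ℝ E]
  [MeasurableSpace E] [BorelSpace E] [NormedAddCommGroup V]

theorem exists_schwartzMap_tendsto_eLpNorm_sub [NormedSpace ℝ V] {μ : Measure E}
    [IsFiniteMeasureOnCompacts μ] {p : ℝ≥0∞} (hp : 1 ≤ p) (hp_top : p ≠ ∞) {f : E → V}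
    (hf : MemLp f p μ) :
    ∃ φ : ℕ → 𝓢(E, V), Tendsto (fun k ↦ eLpNorm (⇑(φ k) - f) p μ) atTop (𝓝 0) := by
  choose g hg_supp hg_smooth hg using fun k : ℕ ↦
    hf.exist_eLpNorm_sub_le hp_top hp (Nat.one_div_pos_of_nat (α := ℝ) (n := k))
  refine ⟨fun k ↦ (hg_supp k).toSchwartzMap (hg_smooth k), ?_⟩
  refine tendsto_of_tendsto_of_tendsto_of_le_of_le tendsto_const_nhds ?_ (fun _ ↦ zero_le)
    fun k ↦ (eLpNorm_sub_comm _ _ _ _).trans_le (hg k)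
  simpa using ENNReal.tendsto_ofReal (tendsto_one_div_add_atTop_nhds_zero_nat (𝕜 := ℝ))

section Normed

variable [NormedSpace ℂ V]

theorem norm_fourier_le_integral_norm (u : E → V) (ξ : E) : ‖𝓕 u ξ‖ ≤ ∫ x, ‖u x‖ :=
  VectorFourier.norm_fourierIntegral_le_integral_norm _ _ _ _ _

theorem continuous_fourier_of_integrable {u : E → V} (hu : Integrable u) : Continuous (𝓕 u) :=
  VectorFourier.fourierIntegral_continuous continuous_fourierChar continuous_inner hu

theorem memLp_two_of_integrable_fourier [CompleteSpace V] {u : E → V} (hc : Continuous u)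
    (hu : Integrable u) (hu' : Integrable (𝓕 u)) : MemLp u 2 := by
  refine memLp_two_of_integrable_of_norm_le hu (B := ∫ ξ, ‖𝓕 u ξ‖) fun x ↦ ?_
  rw [← congrFun (hc.fourierInv_fourier_eq hu hu') x, Real.fourierInv_eq_fourier_neg]
  exact norm_fourier_le_integral_norm _ _

end Normed

variable [InnerProductSpace ℂ V] [CompleteSpace V]

theorem integral_norm_sq_fourier_eq {u : E → V} (hc : Continuous u) (hu : Integrable u)
    (hu' : Integrable (𝓕 u)) : ∫ ξ, ‖𝓕 u ξ‖ ^ 2 = ∫ x, ‖u x‖ ^ 2 := by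
  have hsesq : ∫ ξ, inner ℂ (𝓕 u ξ) (𝓕 u ξ) = ∫ x, inner ℂ (u x) (𝓕⁻ (𝓕 u) x) := by
    simpa [Real.fourierInv_eq, Real.fourier_eq, VectorFourier.fourierIntegral] using
      VectorFourier.integral_sesq_fourierIntegral_eq_neg_flip (innerSL ℂ (E := V))
      (L := innerₗ E) continuous_fourierChar continuous_inner hu hu'
  rw [hc.fourierInv_fourier_eq hu hu'] at hsesq
  apply Complex.ofRealLI.injective
  simpa [← LinearIsometry.integral_comp_comm, inner_self_eq_norm_sq_to_K] using hsesq

theorem eLpNorm_two_fourier_eq {u : E → V} (hc : Continuous u) (hu : Integrable u)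
    (hu' : Integrable (𝓕 u)) : eLpNorm (𝓕 u) 2 = eLpNorm u 2 := by
  have hu'_memLp : MemLp (𝓕 u) 2 :=
    memLp_two_of_integrable_of_norm_le hu' (norm_fourier_le_integral_norm u)
  rw [hu'_memLp.eLpNorm_eq_integral_rpow_norm two_ne_zero ENNReal.ofNat_ne_top,
    (memLp_two_of_integrable_fourier hc hu hu').eLpNorm_eq_integral_rpow_norm two_ne_zero
      ENNReal.ofNat_ne_top]
  simp [integral_norm_sq_fourier_eq hc hu hu']

theorem eLpNorm_two_convolution_schwartzMap_le {K : E → ℂ} {M : ℝ} (hK : Integrable K)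
    (hM : ∀ ξ, ‖𝓕 K ξ‖ ≤ M) (φ : 𝓢(E, V)) :
    eLpNorm (K ⋆[lsmul ℂ ℂ] φ) 2 ≤ ENNReal.ofReal M * eLpNorm φ 2 := by
  set u := K ⋆[lsmul ℂ ℂ] φ
  have hu : Integrable u := hK.integrable_convolution _ φ.integrable
  have hu_cont : Continuous u :=
    BddAbove.continuous_convolution_right_of_integrable _
      ⟨_, Set.forall_mem_range.2 (SchwartzMap.norm_le_seminorm ℂ φ)⟩ hK φ.continuous
  have hφ : Integrable (𝓕 ⇑φ) := φ.fourier_coe ▸ (𝓕 φ).integrable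
  have hle (ξ : E) : ‖𝓕 u ξ‖ ≤ M * ‖𝓕 (⇑φ) ξ‖ := by
    rw [Real.fourier_smul_convolution_eq hK φ.integrable, norm_smul]
    gcongr
    exact hM ξ
  have hu' : Integrable (𝓕 u) :=
    (hφ.norm.const_mul M).mono' (continuous_fourier_of_integrable hu).aestronglyMeasurable
      (.of_forall hle)
  rw [← eLpNorm_two_fourier_eq hu_cont hu hu',
    ← eLpNorm_two_fourier_eq φ.continuous φ.integrable hφ]
  exact eLpNorm_le_mul_eLpNorm_of_ae_le_mul (.of_forall hle) 2

theorem eLpNorm_two_convolution_le {K : E → ℂ} {M : ℝ} (hK : Integrable K) (hK2 : MemLp K 2)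
    (hM : ∀ ξ, ‖𝓕 K ξ‖ ≤ M) {f : E → V} (hf : MemLp f 2) :
    eLpNorm (K ⋆[lsmul ℂ ℂ] f) 2 ≤ ENNReal.ofReal M * eLpNorm f 2 := by
  obtain ⟨φ, hφ⟩ := exists_schwartzMap_tendsto_eLpNorm_sub one_le_two ENNReal.ofNat_ne_top hf
  exact eLpNorm_convolution_le_of_tendsto one_le_two hK2 hf (fun k ↦ (φ k).memLp 2) hφ
    ENNReal.ofReal_ne_top fun k ↦ eLpNorm_two_convolution_schwartzMap_le hK hM (φ k)

end Plancherel

theorem measurableEmbedding_ofLp {α : Type*} [MeasurableSpace α] (p : ℝ≥0∞) :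
    MeasurableEmbedding (WithLp.ofLp : WithLp p α → α) :=
  (MeasurableEquiv.toLp p α).symm.measurableEmbedding

section ProductSpace

variable {E₁ E₂ V : Type*}
  [NormedAddCommGroup E₁] [InnerProductSpace ℝ E₁] [FiniteDimensional ℝ E₁] [MeasurableSpace E₁]
  [BorelSpace E₁]
  [NormedAddCommGroup E₂] [InnerProductSpace ℝ E₂] [FiniteDimensional ℝ E₂] [MeasurableSpace E₂]
  [BorelSpace E₂] [NormedAddCommGroup V]

instance isAddHaarMeasure_volume_prod :
    (volume : Measure (E₁ × E₂)).IsAddHaarMeasure :=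
  inferInstanceAs (volume.prod volume).IsAddHaarMeasure

theorem fourier_comp_ofLp_prod [NormedSpace ℂ V] {K : E₁ × E₂ → V} (hK : Integrable K)
    (ξ : WithLp 2 (E₁ × E₂)) :
    𝓕 (fun p : WithLp 2 (E₁ × E₂) ↦ K p.ofLp) ξ =
      𝓕 (fun x ↦ 𝓕 (fun y ↦ K (x, y)) ξ.snd) ξ.fst := by
  have hofLp := WithLp.volume_preserving_ofLp E₁ E₂
  have hphase₁ : Continuous fun p : E₁ × E₂ ↦ 𝐞 (-inner ℝ p.1 ξ.fst) :=
    continuous_fourierChar.comp (by fun_prop)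
  have hphase₂ : Continuous fun p : E₁ × E₂ ↦ 𝐞 (-inner ℝ p.2 ξ.snd) :=
    continuous_fourierChar.comp (by fun_prop)
  have hint : Integrable fun p : E₁ × E₂ ↦
      𝐞 (-inner ℝ p.1 ξ.fst) • 𝐞 (-inner ℝ p.2 ξ.snd) • K p :=
    hK.norm.mono'
      (hphase₁.aestronglyMeasurable.smul (hphase₂.aestronglyMeasurable.smul hK.1))
      (.of_forall fun p ↦ by simp [Circle.norm_smul])
  calc 𝓕 (fun p : WithLp 2 (E₁ × E₂) ↦ K p.ofLp) ξ
      = ∫ p : E₁ × E₂, 𝐞 (-inner ℝ p.1 ξ.fst) • 𝐞 (-inner ℝ p.2 ξ.snd) • K p := by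
        rw [Real.fourier_eq, ← hofLp.integral_comp (measurableEmbedding_ofLp 2)]
        simp only [WithLp.prod_inner_apply, neg_add, AddChar.map_add_eq_mul, mul_smul]
        rfl
    _ = 𝓕 (fun x ↦ 𝓕 (fun y ↦ K (x, y)) ξ.snd) ξ.fst := by
        rw [Measure.volume_eq_prod, integral_prod _ hint]
        simp only [Real.fourier_eq, Circle.smul_def, integral_smul]

theorem eLpNorm_two_convolution_prod_le [InnerProductSpace ℂ V] [CompleteSpace V]
    {K : E₁ × E₂ → ℂ} {M : ℝ} (hK : Integrable K) (hK2 : MemLp K 2)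
    (hM : ∀ η, ∫ x, ‖𝓕 (fun y ↦ K (x, y)) η‖ ≤ M) {f : E₁ × E₂ → V} (hf : MemLp f 2) :
    eLpNorm (K ⋆[lsmul ℂ ℂ] f) 2 ≤ ENNReal.ofReal M * eLpNorm f 2 := by
  have hofLp := WithLp.volume_preserving_ofLp E₁ E₂
  have hle := eLpNorm_two_convolution_le (K := fun p : WithLp 2 (E₁ × E₂) ↦ K p.ofLp)
    ((hofLp.integrable_comp_emb (measurableEmbedding_ofLp 2)).2 hK)
    (hK2.comp_measurePreserving hofLp)
    (fun ξ ↦ fourier_comp_ofLp_prod hK ξ ▸ (norm_fourier_le_integral_norm _ _).trans (hM ξ.snd))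
    (hf.comp_measurePreserving hofLp)
  have hconv : (fun p : WithLp 2 (E₁ × E₂) ↦ K p.ofLp) ⋆[lsmul ℂ ℂ] (f ∘ WithLp.ofLp) =
      (K ⋆[lsmul ℂ ℂ] f) ∘ WithLp.ofLp := by
    ext p
    exact hofLp.integral_comp (measurableEmbedding_ofLp 2) fun q ↦ K q • f (p.ofLp - q)
  rwa [hconv, eLpNorm_comp_measurePreserving hf.1 hofLp,
    eLpNorm_comp_measurePreserving (aestronglyMeasurable_convolution hK.1 hf.1) hofLp] at hle

end ProductSpace

section Gaussian

theorem integrable_exp_neg_mul_sq_norm {E : Type*} [NormedAddCommGroup E] [InnerProductSpace ℝ E]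
    [FiniteDimensional ℝ E] [MeasurableSpace E] [BorelSpace E] {a : ℝ} (ha : 0 < a) :
    Integrable fun x : E ↦ rexp (-a * ‖x‖ ^ 2) := by
  simpa [Complex.norm_exp, ← Complex.ofReal_pow] using
    (GaussianFourier.integrable_cexp_neg_mul_sq_norm_add (V := E) (b := a) (by simpa) 0 0).norm

theorem sq_mul_exp_neg_mul_sq_le {a : ℝ} (ha : 0 < a) (r : ℝ) :
    r ^ 2 * rexp (-a * r ^ 2) ≤ 2 / a * rexp (-(a / 2) * r ^ 2) := by
  have hle : r ^ 2 ≤ 2 / a * rexp (a / 2 * r ^ 2) := by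
    rw [div_mul_eq_mul_div, le_div_iff₀ ha]
    linarith [Real.add_one_le_exp (a / 2 * r ^ 2)]
  calc r ^ 2 * rexp (-a * r ^ 2) ≤ 2 / a * rexp (a / 2 * r ^ 2) * rexp (-a * r ^ 2) := by gcongr
    _ = 2 / a * rexp (-(a / 2) * r ^ 2) := by
      rw [mul_assoc, ← Real.exp_add]
      ring_nf

end Gaussian

theorem hasDerivAt_fourier_of_dominated {E V : Type*} [NormedAddCommGroup E]
    [InnerProductSpace ℝ E] [FiniteDimensional ℝ E] [MeasurableSpace E] [BorelSpace E]
    [NormedAddCommGroup V] [NormedSpace ℂ V] {u u' : ℝ → E → V} {bound : E → ℝ} {t : ℝ}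
    {s : Set ℝ} (hs : s ∈ 𝓝 t) (hu_meas : ∀ τ ∈ s, AEStronglyMeasurable (u τ))
    (hu : Integrable (u t)) (hu'_meas : AEStronglyMeasurable (u' t))
    (hu' : ∀ τ ∈ s, ∀ x, ‖u' τ x‖ ≤ bound x) (hbound : Integrable bound)
    (hderiv : ∀ τ ∈ s, ∀ x, HasDerivAt (u · x) (u' τ x) τ) (ξ : E) :
    HasDerivAt (fun τ ↦ 𝓕 (u τ) ξ) (𝓕 (u' t) ξ) t := by
  have hphase : AEStronglyMeasurable fun x : E ↦ 𝐞 (-inner ℝ x ξ) :=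
    (continuous_fourierChar.comp (by fun_prop)).aestronglyMeasurable
  simp only [Real.fourier_eq]
  refine (hasDerivAt_integral_of_dominated_loc_of_deriv_le
    (F' := fun τ x ↦ 𝐞 (-inner ℝ x ξ) • u' τ x) hs
    (eventually_of_mem hs fun τ hτ ↦ hphase.smul (hu_meas τ hτ))
    ((Real.fourierIntegral_convergent_iff ξ).2 hu) (hphase.smul hu'_meas)
    (.of_forall fun x τ hτ ↦ ?_) hbound (.of_forall fun x τ hτ ↦ ?_)).2
  · simpa only [Circle.norm_smul] using hu' τ hτ x
  · exact (hderiv τ hτ x).const_smul (𝐞 (-inner ℝ x ξ) : ℂ)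

section HeatKernel

variable {n : ℕ}

theorem continuous_heatKernel (n : ℕ) (t : ℝ) : Continuous (heatKernel n t) := by
  unfold heatKernel
  fun_prop

theorem continuous_heatKernelLap (n : ℕ) (t : ℝ) : Continuous (heatKernelLap n t) := by
  have := continuous_heatKernel n t
  unfold heatKernelLap
  fun_prop

theorem measurable_uncurry_heatKernelLap (n : ℕ) :
    Measurable (Function.uncurry (heatKernelLap n)) := by
  unfold heatKernelLap heatKernel Function.uncurry
  fun_prop

theorem heatKernel_nonneg {t : ℝ} (ht : 0 ≤ t) (x : Rn n) : 0 ≤ heatKernel n t x := by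
  unfold heatKernel
  positivity

theorem heatKernel_le_of_mem_Icc {ε R t : ℝ} (hε : 0 < ε) (ht : t ∈ Set.Icc ε R) (x : Rn n) :
    heatKernel n t x ≤ (4 * π * ε) ^ (-(n : ℝ) / 2) * rexp (-(1 / (4 * R)) * ‖x‖ ^ 2) := by
  have ht_pos : 0 < t := hε.trans_le ht.1
  have hexp : -‖x‖ ^ 2 / (4 * t) ≤ -(1 / (4 * R)) * ‖x‖ ^ 2 := by
    calc -‖x‖ ^ 2 / (4 * t) = -(1 / (4 * t)) * ‖x‖ ^ 2 := by ring
      _ ≤ -(1 / (4 * R)) * ‖x‖ ^ 2 := by gcongr; exact ht.2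
  have hpow : (4 * π * t) ^ (-(n : ℝ) / 2) ≤ (4 * π * ε) ^ (-(n : ℝ) / 2) :=
    Real.rpow_le_rpow_of_nonpos (by positivity) (by gcongr; exact ht.1)
      (div_nonpos_of_nonpos_of_nonneg (by simp) two_pos.le)
  unfold heatKernel
  gcongr

theorem integrable_heatKernel {t : ℝ} (ht : 0 < t) : Integrable (heatKernel n t) := by
  refine ((integrable_exp_neg_mul_sq_norm (a := 1 / (4 * t)) (by positivity)).const_mul
    ((4 * π * t) ^ (-(n : ℝ) / 2))).mono' (continuous_heatKernel n t).aestronglyMeasurable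
    (.of_forall fun x ↦ ?_)
  rw [Real.norm_of_nonneg (heatKernel_nonneg ht.le x)]
  exact heatKernel_le_of_mem_Icc ht (Set.left_mem_Icc.2 le_rfl) x

theorem exists_norm_heatKernelLap_le (n : ℕ) {ε R : ℝ} (hε : 0 < ε) (hR : 0 < R) :
    ∃ A c : ℝ, 0 ≤ A ∧ 0 < c ∧ ∀ t ∈ Set.Icc ε R, ∀ x : Rn n,
      ‖heatKernelLap n t x‖ ≤ A * rexp (-c * ‖x‖ ^ 2) := by
  set B := (4 * π * ε) ^ (-(n : ℝ) / 2)
  set a := 1 / (4 * R)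
  have ha : 0 < a := by positivity
  refine ⟨B * ((4 * ε ^ 2)⁻¹ * (2 / a) + n / (2 * ε)), a / 2, by positivity,
    by positivity, fun t ht x ↦ ?_⟩
  have ht_pos : 0 < t := hε.trans_le ht.1
  have hfactor : |‖x‖ ^ 2 / (4 * t ^ 2) - n / (2 * t)| ≤
      ‖x‖ ^ 2 / (4 * ε ^ 2) + n / (2 * ε) := by
    refine (abs_sub _ _).trans ?_
    rw [abs_of_nonneg (by positivity), abs_of_nonneg (by positivity)]
    have := ht.1
    gcongr
  have hexp : rexp (-a * ‖x‖ ^ 2) ≤ rexp (-(a / 2) * ‖x‖ ^ 2) := by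
    gcongr
    linarith
  rw [heatKernelLap, norm_mul, Real.norm_of_nonneg (heatKernel_nonneg ht_pos.le x),
    Real.norm_eq_abs]
  calc |‖x‖ ^ 2 / (4 * t ^ 2) - n / (2 * t)| * heatKernel n t x
      ≤ (‖x‖ ^ 2 / (4 * ε ^ 2) + n / (2 * ε)) * (B * rexp (-a * ‖x‖ ^ 2)) := by
        gcongr
        · exact heatKernel_nonneg ht_pos.le x
        · exact heatKernel_le_of_mem_Icc hε ht x
    _ = B * ((4 * ε ^ 2)⁻¹ * (‖x‖ ^ 2 * rexp (-a * ‖x‖ ^ 2)) +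
          n / (2 * ε) * rexp (-a * ‖x‖ ^ 2)) := by ring
    _ ≤ B * ((4 * ε ^ 2)⁻¹ * (2 / a * rexp (-(a / 2) * ‖x‖ ^ 2)) +
          n / (2 * ε) * rexp (-(a / 2) * ‖x‖ ^ 2)) := by
        gcongr B * (_ * ?_ + _ * ?_)
        exact sq_mul_exp_neg_mul_sq_le ha _
    _ = _ := by ring

theorem hasDerivAt_heatKernel {t : ℝ} (ht : 0 < t) (x : Rn n) :
    HasDerivAt (heatKernel n · x) (heatKernelLap n t x) t := by
  have hpow : HasDerivAt (fun τ : ℝ ↦ (4 * π * τ) ^ (-(n : ℝ) / 2))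
      (-n / (2 * t) * (4 * π * t) ^ (-(n : ℝ) / 2)) t := by
    refine (((hasDerivAt_id t).const_mul (4 * π)).rpow_const (.inl (by positivity))).congr_deriv ?_
    rw [id, Real.rpow_sub_one (by positivity)]
    field_simp
  have hexp : HasDerivAt (fun τ ↦ rexp (-‖x‖ ^ 2 / (4 * τ)))
      (‖x‖ ^ 2 / (4 * t ^ 2) * rexp (-‖x‖ ^ 2 / (4 * t))) t := by
    refine ((hasDerivAt_const t (-‖x‖ ^ 2)).fun_div ((hasDerivAt_id t).const_mul 4)
      (by positivity)).exp.congr_deriv ?_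
    simp only [id]
    field_simp
    ring
  refine (hpow.fun_mul hexp).congr_deriv ?_
  rw [heatKernelLap, heatKernel]
  ring

theorem fourier_heatKernel {t : ℝ} (ht : 0 < t) (w : Rn n) :
    𝓕 (fun x ↦ (heatKernel n t x : ℂ)) w = rexp (-(4 * π ^ 2 * ‖w‖ ^ 2) * t) := by
  have hgauss := fourier_gaussian_innerProductSpace (V := Rn n) (b := ((4 * t)⁻¹ : ℝ))
    (by rw [Complex.ofReal_re]; positivity) w
  have hcancel : (4 * π * t) ^ (-(n : ℝ) / 2) * (π / (4 * t)⁻¹) ^ ((n : ℝ) / 2) = 1 := by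
    rw [div_inv_eq_mul, neg_div, Real.rpow_neg (by positivity), mul_left_comm, ← mul_assoc,
      inv_mul_cancel₀ (by positivity)]
  have hkernel (x : Rn n) : (heatKernel n t x : ℂ) =
      (((4 * π * t) ^ (-(n : ℝ) / 2) : ℝ) : ℂ) * Complex.exp (-((4 * t)⁻¹ : ℝ) * ‖x‖ ^ 2) := by
    rw [heatKernel, Complex.ofReal_mul, Complex.ofReal_exp]
    push_cast
    ring_nf
  calc 𝓕 (fun x ↦ (heatKernel n t x : ℂ)) w
      = (((4 * π * t) ^ (-(n : ℝ) / 2) : ℝ) : ℂ) *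
          𝓕 (fun x : Rn n ↦ Complex.exp (-((4 * t)⁻¹ : ℝ) * ‖x‖ ^ 2)) w := by
        simp only [hkernel, Real.fourier_eq, Circle.smul_def, smul_eq_mul,
          mul_left_comm _ (((4 * π * t) ^ (-(n : ℝ) / 2) : ℝ) : ℂ), integral_const_mul]
    _ = ((4 * π * t) ^ (-(n : ℝ) / 2) * (π / (4 * t)⁻¹) ^ ((n : ℝ) / 2) *
          rexp (-π ^ 2 * ‖w‖ ^ 2 / (4 * t)⁻¹) : ℝ) := by
        rw [hgauss, finrank_euclideanSpace_fin]
        push_cast [Complex.ofReal_cpow (show 0 ≤ π / (4 * t)⁻¹ by positivity)]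
        ring
    _ = rexp (-(4 * π ^ 2 * ‖w‖ ^ 2) * t) := by
        rw [hcancel, one_mul, div_inv_eq_mul]
        ring_nf

theorem fourier_heatKernelLap {t : ℝ} (ht : 0 < t) (w : Rn n) :
    𝓕 (fun x ↦ (heatKernelLap n t x : ℂ)) w =
      (-(4 * π ^ 2 * ‖w‖ ^ 2) * rexp (-(4 * π ^ 2 * ‖w‖ ^ 2) * t) : ℝ) := by
  obtain ⟨A, c, -, hc, hle⟩ := exists_norm_heatKernelLap_le n (half_pos ht) (mul_pos two_pos ht)
  have hfourier : HasDerivAt (fun τ ↦ 𝓕 (fun x ↦ (heatKernel n τ x : ℂ)) w)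
      (𝓕 (fun x ↦ (heatKernelLap n t x : ℂ)) w) t := by
    refine hasDerivAt_fourier_of_dominated (Icc_mem_nhds (by linarith : t / 2 < t)
      (by linarith : t < 2 * t)) (u := fun τ x ↦ (heatKernel n τ x : ℂ))
      (u' := fun τ x ↦ (heatKernelLap n τ x : ℂ)) (fun τ _ ↦ ?_)
      (integrable_heatKernel ht).ofReal ?_ (fun τ hτ x ↦ ?_)
      ((integrable_exp_neg_mul_sq_norm hc).const_mul A) (fun τ hτ x ↦ ?_) w
    · exact (Complex.continuous_ofReal.comp (continuous_heatKernel n τ)).aestronglyMeasurable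
    · exact (Complex.continuous_ofReal.comp (continuous_heatKernelLap n t)).aestronglyMeasurable
    · simpa only [Complex.norm_real] using hle τ hτ x
    · exact (hasDerivAt_heatKernel (by linarith [hτ.1]) x).ofReal_comp
  have hexp : HasDerivAt (fun τ ↦ rexp (-(4 * π ^ 2 * ‖w‖ ^ 2) * τ))
      (-(4 * π ^ 2 * ‖w‖ ^ 2) * rexp (-(4 * π ^ 2 * ‖w‖ ^ 2) * t)) t := by
    refine ((hasDerivAt_id t).const_mul (-(4 * π ^ 2 * ‖w‖ ^ 2))).exp.congr_deriv ?_
    rw [id, mul_one, mul_comm]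
  refine hfourier.unique (hexp.ofReal_comp.congr_of_eventuallyEq ?_)
  filter_upwards [lt_mem_nhds ht] with τ hτ using fourier_heatKernel hτ w

end HeatKernel

section TruncatedKernel

/-- The space-time convolution kernel `𝟙_[ε, R](t) Δh_t(x)` of the maximal regularity operator,
cut off in time: for `0 < ε` it is integrable and square integrable, which the kernel
`𝟙_(0, ∞)(t) Δh_t(x)` is not. -/
def truncatedHeatKernelLap (n : ℕ) (ε R : ℝ) : ℝ × Rn n → ℂ :=
  (Set.Icc ε R ×ˢ Set.univ).indicator fun p ↦ (heatKernelLap n p.1 p.2 : ℂ)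

variable {n : ℕ} {ε R : ℝ}

theorem truncatedHeatKernelLap_of_mem {t : ℝ} (ht : t ∈ Set.Icc ε R) (x : Rn n) :
    truncatedHeatKernelLap n ε R (t, x) = heatKernelLap n t x :=
  Set.indicator_of_mem (Set.mk_mem_prod ht (Set.mem_univ x)) _

theorem truncatedHeatKernelLap_of_notMem {t : ℝ} (ht : t ∉ Set.Icc ε R) (x : Rn n) :
    truncatedHeatKernelLap n ε R (t, x) = 0 :=
  Set.indicator_of_notMem (fun h ↦ ht h.1) _

theorem measurable_truncatedHeatKernelLap (n : ℕ) (ε R : ℝ) :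
    Measurable (truncatedHeatKernelLap n ε R) :=
  (Complex.measurable_ofReal.comp (measurable_uncurry_heatKernelLap n)).indicator
    (measurableSet_Icc.prod .univ)

theorem exists_norm_truncatedHeatKernelLap_le (n : ℕ) (hε : 0 < ε) (hR : 0 < R) :
    ∃ A c : ℝ, 0 ≤ A ∧ 0 < c ∧ ∀ p : ℝ × Rn n, ‖truncatedHeatKernelLap n ε R p‖ ≤
      (Set.Icc ε R).indicator (fun _ ↦ A) p.1 * rexp (-c * ‖p.2‖ ^ 2) := by
  obtain ⟨A, c, hA, hc, hle⟩ := exists_norm_heatKernelLap_le n hε hR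
  refine ⟨A, c, hA, hc, fun ⟨t, x⟩ ↦ ?_⟩
  by_cases ht : t ∈ Set.Icc ε R
  · simpa [truncatedHeatKernelLap_of_mem ht, ht] using hle t ht x
  · simp [truncatedHeatKernelLap_of_notMem ht, ht]

theorem integrable_truncatedHeatKernelLap (n : ℕ) (hε : 0 < ε) (hR : 0 < R) :
    Integrable (truncatedHeatKernelLap n ε R) := by
  obtain ⟨A, c, -, hc, hle⟩ := exists_norm_truncatedHeatKernelLap_le n hε hR
  have htime : Integrable ((Set.Icc ε R).indicator fun _ ↦ A) :=
    (integrable_indicator_iff measurableSet_Icc).2 (integrableOn_const measure_Icc_lt_top.ne)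
  exact (htime.mul_prod (integrable_exp_neg_mul_sq_norm hc)).mono'
    (measurable_truncatedHeatKernelLap n ε R).aestronglyMeasurable (.of_forall hle)

theorem memLp_two_truncatedHeatKernelLap (n : ℕ) (hε : 0 < ε) (hR : 0 < R) :
    MemLp (truncatedHeatKernelLap n ε R) 2 := by
  obtain ⟨A, c, hA, hc, hle⟩ := exists_norm_truncatedHeatKernelLap_le n hε hR
  refine memLp_two_of_integrable_of_norm_le (B := A) (integrable_truncatedHeatKernelLap n hε hR)
    fun p ↦ (hle p).trans ?_
  have hexp : rexp (-c * ‖p.2‖ ^ 2) ≤ 1 := Real.exp_le_one_iff.2 (by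
    rw [neg_mul]
    exact neg_nonpos.2 (by positivity))
  exact (mul_le_of_le_one_right (Set.indicator_nonneg (fun _ _ ↦ hA) _) hexp).trans
    (Set.indicator_le_self' (fun _ _ ↦ hA) _)

theorem setIntegral_Icc_mul_exp_neg_mul_le_one {a : ℝ} (ha : 0 ≤ a) (hε : 0 ≤ ε) (hεR : ε ≤ R) :
    ∫ t in Set.Icc ε R, a * rexp (-a * t) ≤ 1 := by
  have hderiv (t : ℝ) : HasDerivAt (fun τ ↦ -rexp (-a * τ)) (a * rexp (-a * t)) t := by
    refine ((hasDerivAt_id t).const_mul (-a)).exp.fun_neg.congr_deriv ?_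
    rw [id]
    ring
  rw [integral_Icc_eq_integral_Ioc, ← intervalIntegral.integral_of_le hεR,
    intervalIntegral.integral_eq_sub_of_hasDerivAt (fun t _ ↦ hderiv t)
      (Continuous.intervalIntegrable (by fun_prop) _ _)]
  have hexp : rexp (-a * ε) ≤ 1 := Real.exp_le_one_iff.2 (by
    rw [neg_mul]
    exact neg_nonpos.2 (by positivity))
  linarith [Real.exp_pos (-a * R)]

theorem integral_norm_fourier_truncatedHeatKernelLap_le_one (hε : 0 < ε) (hεR : ε ≤ R)
    (w : Rn n) : ∫ t, ‖𝓕 (fun x ↦ truncatedHeatKernelLap n ε R (t, x)) w‖ ≤ 1 := by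
  have hfourier : (fun t ↦ ‖𝓕 (fun x ↦ truncatedHeatKernelLap n ε R (t, x)) w‖) =
      (Set.Icc ε R).indicator fun t ↦
        4 * π ^ 2 * ‖w‖ ^ 2 * rexp (-(4 * π ^ 2 * ‖w‖ ^ 2) * t) := by
    ext t
    by_cases ht : t ∈ Set.Icc ε R
    · simp only [truncatedHeatKernelLap_of_mem ht, Set.indicator_of_mem ht,
        fourier_heatKernelLap (hε.trans_le ht.1), neg_mul, Complex.ofReal_neg, norm_neg]
      exact Complex.norm_of_nonneg (by positivity)
    · simp [truncatedHeatKernelLap_of_notMem ht, Set.indicator_of_notMem ht, Real.fourier_eq]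
  rw [hfourier, integral_indicator measurableSet_Icc]
  exact setIntegral_Icc_mul_exp_neg_mul_le_one (by positivity) hε.le hεR

theorem eLpNorm_two_convolution_truncatedHeatKernelLap_le {V : Type*} [NormedAddCommGroup V]
    [InnerProductSpace ℂ V] [CompleteSpace V] (hε : 0 < ε) (hεR : ε ≤ R) {f : ℝ × Rn n → V}
    (hf : MemLp f 2) :
    eLpNorm (truncatedHeatKernelLap n ε R ⋆[lsmul ℂ ℂ] f) 2 ≤ eLpNorm f 2 := by
  have hR := hε.trans_le hεR
  simpa using eLpNorm_two_convolution_prod_le (integrable_truncatedHeatKernelLap n hε hR)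
    (memLp_two_truncatedHeatKernelLap n hε hR)
    (integral_norm_fourier_truncatedHeatKernelLap_le_one hε hεR) hf

end TruncatedKernel

theorem eLpNorm_two_eq_lintegral {α V : Type*} [MeasurableSpace α] {μ : Measure α}
    [NormedAddCommGroup V] (f : α → V) :
    eLpNorm f 2 μ = (∫⁻ x, ‖f x‖ₑ ^ 2 ∂μ) ^ (1 / 2 : ℝ) := by
  simp [eLpNorm_eq_lintegral_rpow_enorm_toReal two_ne_zero ENNReal.ofNat_ne_top]

section HalfSpace

variable {n : ℕ} {V : Type*} [NormedAddCommGroup V]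

/-- The extension of a function on the half space `(0, ∞) × ℝⁿ` to `ℝ × ℝⁿ` by zero. -/
def zeroExtension (F : ℝ → Rn n → V) : ℝ × Rn n → V :=
  (Set.Ioi 0 ×ˢ Set.univ).indicator (Function.uncurry F)

theorem zeroExtension_of_pos (F : ℝ → Rn n → V) {t : ℝ} (ht : 0 < t) (x : Rn n) :
    zeroExtension F (t, x) = F t x :=
  Set.indicator_of_mem (Set.mk_mem_prod ht (Set.mem_univ x)) _

theorem zeroExtension_of_nonpos (F : ℝ → Rn n → V) {t : ℝ} (ht : t ≤ 0) (x : Rn n) :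
    zeroExtension F (t, x) = 0 :=
  Set.indicator_of_notMem (fun h ↦ ht.not_gt h.1) _

theorem eLpNorm_two_zeroExtension {F : ℝ → Rn n → V}
    (hF : AEStronglyMeasurable (zeroExtension F)) :
    eLpNorm (zeroExtension F) 2 = l2HalfNorm F := by
  have hslice (t : ℝ) : ∫⁻ x, ‖zeroExtension F (t, x)‖ₑ ^ 2 =
      (Set.Ioi 0).indicator (fun t ↦ ∫⁻ x, ‖F t x‖ₑ ^ 2) t := by
    rcases lt_or_ge 0 t with ht | ht
    · simp [zeroExtension_of_pos F ht, Set.indicator_of_mem (Set.mem_Ioi.2 ht)]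
    · simp [zeroExtension_of_nonpos F ht, ht]
  rw [eLpNorm_two_eq_lintegral, Measure.volume_eq_prod, lintegral_prod _ (hF.enorm.pow_const 2),
    lintegral_congr hslice, lintegral_indicator measurableSet_Ioi]
  rfl

theorem l2HalfNorm_le_of_enorm_sq_le_liminf {W : Type*} [NormedAddCommGroup W]
    {G : ℝ → Rn n → V} {H : ℕ → ℝ × Rn n → W} {M : ℝ≥0∞} (hH : ∀ k, AEStronglyMeasurable (H k))
    (hle : ∀ t x, ‖G t x‖ₑ ^ 2 ≤ liminf (fun k ↦ ‖H k (t, x)‖ₑ ^ 2) atTop)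
    (hM : ∀ k, eLpNorm (H k) 2 ≤ M) : l2HalfNorm G ≤ M := by
  have hH_sq (k : ℕ) : AEMeasurable fun p ↦ ‖H k p‖ₑ ^ 2 := (hH k).enorm.pow_const 2
  have hliminf : AEMeasurable fun p ↦ liminf (fun k ↦ ‖H k p‖ₑ ^ 2) atTop := by
    simp only [liminf_eq_iSup_iInf_of_nat']
    exact .iSup fun N ↦ .iInf fun k ↦ hH_sq (k + N)
  have hM_sq (k : ℕ) : ∫⁻ p, ‖H k p‖ₑ ^ 2 ≤ M ^ (2 : ℝ) := by
    have := hM k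
    rwa [eLpNorm_two_eq_lintegral, one_div, ENNReal.rpow_inv_le_iff two_pos] at this
  rw [l2HalfNorm, one_div, ENNReal.rpow_inv_le_iff two_pos]
  calc ∫⁻ t in Set.Ioi (0 : ℝ), ∫⁻ x, ‖G t x‖ₑ ^ 2
      ≤ ∫⁻ t, ∫⁻ x, ‖G t x‖ₑ ^ 2 := setLIntegral_le_lintegral _ _
    _ ≤ ∫⁻ t, ∫⁻ x, liminf (fun k ↦ ‖H k (t, x)‖ₑ ^ 2) atTop :=
      lintegral_mono fun t ↦ lintegral_mono (hle t)
    _ = ∫⁻ p, liminf (fun k ↦ ‖H k p‖ₑ ^ 2) atTop := by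
      rw [Measure.volume_eq_prod, lintegral_prod _ hliminf]
    _ ≤ liminf (fun k ↦ ∫⁻ p, ‖H k p‖ₑ ^ 2) atTop := lintegral_liminf_le' hH_sq
    _ ≤ M ^ (2 : ℝ) := liminf_le_of_le (by isBoundedDefault) fun b hb ↦
      hb.exists.elim fun k hk ↦ hk.trans (hM_sq k)

end HalfSpace

section MaximalRegularity

variable {n : ℕ} {V : Type*} [NormedAddCommGroup V] [InnerProductSpace ℂ V] {F : ℝ → Rn n → V}

theorem convolution_truncatedHeatKernelLap_zeroExtension {ε R : ℝ} (hε : 0 < ε) (hεR : ε ≤ R)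
    (hF : MemLp (zeroExtension F) 2) (t : ℝ) (x : Rn n) :
    (truncatedHeatKernelLap n ε R ⋆[lsmul ℂ ℂ] zeroExtension F) (t, x) =
      ∫ s in Set.Ioo 0 t, {s | t - s ∈ Set.Icc ε R}.indicator
        (fun s ↦ ∫ y, heatKernelLap n (t - s) (x - y) • F s y) s := by
  have hint : Integrable fun q : ℝ × Rn n ↦
      truncatedHeatKernelLap n ε R ((t, x) - q) • zeroExtension F q :=
    (convolutionExists_of_memLp (memLp_two_truncatedHeatKernelLap n hε (hε.trans_le hεR)) hF
      (t, x)).integrable_swap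
  rw [convolution_lsmul_swap, Measure.volume_eq_prod, integral_prod _ hint,
    ← integral_indicator measurableSet_Ioo]
  congr with s
  simp only [Prod.mk_sub_mk]
  by_cases hs : t - s ∈ Set.Icc ε R
  · have hst : s < t := by linarith [hs.1]
    rcases lt_or_ge 0 s with hs_pos | hs_nonpos
    · rw [Set.indicator_of_mem (Set.mem_Ioo.2 ⟨hs_pos, hst⟩),
        Set.indicator_of_mem (s := {s | t - s ∈ Set.Icc ε R}) hs]
      simp only [truncatedHeatKernelLap_of_mem hs, zeroExtension_of_pos F hs_pos,
        Complex.coe_smul]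
    · rw [Set.indicator_of_notMem fun h ↦ hs_nonpos.not_gt h.1]
      simp only [zeroExtension_of_nonpos F hs_nonpos, smul_zero, integral_zero]
  · rw [Set.indicator_indicator, Set.indicator_of_notMem fun h ↦ hs h.2]
    simp only [truncatedHeatKernelLap_of_notMem hs, zero_smul, integral_zero]

theorem one_div_natCast_add_one_le (k : ℕ) : 1 / ((k : ℝ) + 1) ≤ k + 1 := by
  have hk : (1 : ℝ) ≤ k + 1 := by simp
  exact (div_le_self zero_le_one hk).trans hk

theorem tendsto_convolution_truncatedHeatKernelLap (hF : MemLp (zeroExtension F) 2)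
    {t : ℝ} {x : Rn n} (hint : IntegrableOn
      (fun s ↦ ∫ y, heatKernelLap n (t - s) (x - y) • F s y) (Set.Ioo 0 t)) :
    Tendsto (fun k : ℕ ↦ (truncatedHeatKernelLap n (1 / (k + 1)) (k + 1) ⋆[lsmul ℂ ℂ]
      zeroExtension F) (t, x)) atTop (𝓝 (maxReg n F t x)) := by
  have hcutoff (k : ℕ) : MeasurableSet {s : ℝ | t - s ∈ Set.Icc (1 / (k + 1) : ℝ) (k + 1)} :=
    measurable_const.sub measurable_id measurableSet_Icc
  simp_rw [fun k : ℕ ↦ convolution_truncatedHeatKernelLap_zeroExtension (ε := 1 / (k + 1))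
    (R := k + 1) (by positivity) (one_div_natCast_add_one_le k) hF t x]
  refine tendsto_integral_of_dominated_convergence
    (fun s ↦ ‖∫ y, heatKernelLap n (t - s) (x - y) • F s y‖)
    (fun k ↦ hint.aestronglyMeasurable.indicator (hcutoff k)) hint.norm
    (fun k ↦ .of_forall fun s ↦ norm_indicator_le_norm_self _ s)
    ((ae_restrict_iff' measurableSet_Ioo).2 (.of_forall fun s hs ↦ ?_))
  have hlower : ∀ᶠ k : ℕ in atTop, 1 / ((k : ℝ) + 1) ≤ t - s :=
    tendsto_one_div_add_atTop_nhds_zero_nat.eventually_le_const (sub_pos.2 hs.2)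
  have hupper : ∀ᶠ k : ℕ in atTop, t - s ≤ (k : ℝ) + 1 :=
    (tendsto_atTop_add_const_right _ 1 tendsto_natCast_atTop_atTop).eventually_ge_atTop _
  refine tendsto_const_nhds.congr' ?_
  filter_upwards [hlower, hupper] with k hk_lower hk_upper
  have hmem : s ∈ {s : ℝ | t - s ∈ Set.Icc (1 / (k + 1) : ℝ) (k + 1)} := ⟨hk_lower, hk_upper⟩
  exact (Set.indicator_of_mem hmem fun s ↦ ∫ y, heatKernelLap n (t - s) (x - y) • F s y).symm

theorem enorm_sq_maxReg_le_liminf (hF : MemLp (zeroExtension F) 2) (t : ℝ) (x : Rn n) :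
    ‖maxReg n F t x‖ₑ ^ 2 ≤ liminf (fun k : ℕ ↦ ‖(truncatedHeatKernelLap n (1 / (k + 1)) (k + 1)
      ⋆[lsmul ℂ ℂ] zeroExtension F) (t, x)‖ₑ ^ 2) atTop := by
  by_cases hint : IntegrableOn
      (fun s ↦ ∫ y, heatKernelLap n (t - s) (x - y) • F s y) (Set.Ioo 0 t)
  · exact (((ENNReal.continuous_pow 2).tendsto _).comp
      (tendsto_convolution_truncatedHeatKernelLap hF hint).enorm).liminf_eq.ge
  · -- Where the time integral diverges, `maxReg` has the junk value `0`.
    simp [maxReg, integral_undef hint]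

end MaximalRegularity

theorem maxReg_L2_estimate_general (n : ℕ) {V : Type*} [NormedAddCommGroup V]
    [InnerProductSpace ℂ V] [CompleteSpace V] {F : ℝ → Rn n → V}
    (hF : AEStronglyMeasurable (Function.uncurry F)
      (volume.restrict (Set.Ioi 0 ×ˢ Set.univ))) :
    l2HalfNorm (maxReg n F) ≤ l2HalfNorm F := by
  have hF₀ : AEStronglyMeasurable (zeroExtension F) :=
    (aestronglyMeasurable_indicator_iff (measurableSet_Ioi.prod .univ)).2 hF
  rcases eq_or_ne (l2HalfNorm F) ∞ with htop | hfin
  · exact htop ▸ le_top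
  rw [← eLpNorm_two_zeroExtension hF₀] at hfin ⊢
  have hF₂ : MemLp (zeroExtension F) 2 := ⟨hF₀, hfin.lt_top⟩
  exact l2HalfNorm_le_of_enorm_sq_le_liminf
    (fun k ↦ aestronglyMeasurable_convolution
      (measurable_truncatedHeatKernelLap n _ _).aestronglyMeasurable hF₀)
    (enorm_sq_maxReg_le_liminf hF₂)
    fun k ↦ eLpNorm_two_convolution_truncatedHeatKernelLap_le (by positivity)
      (one_div_natCast_add_one_le k) hF₂

/-- De Simon's theorem: the maximal regularity operator
`(M⁺F)(t,·) = ∫₀^t (Δh_{t-s}) ⋆ F(s,·) ds` is bounded on `L²(ℝ^{n+1}_+)`. -/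
theorem maxReg_L2_estimate (n : ℕ) (hn : 1 ≤ n) :
    ∃ C > (0 : ℝ), ∀ F : ℝ → Rn n → ℂ,
      Measurable (Function.uncurry F) →
      l2HalfNorm F ≠ ∞ →
      l2HalfNorm (maxReg n F) ≤ ENNReal.ofReal C * l2HalfNorm F := by
  refine ⟨1, one_pos, fun F hF _ ↦ ?_⟩
  simpa using maxReg_L2_estimate_general n hF.aestronglyMeasurable
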